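/- arXiv:2208.08915 — 5 statements merged into one kernel-verified Lean document; each statement's English description precedes it below -/
import Mathlib

section
/- Let X be a binary string (over {0,1}) of length n, let P = X·0^n and T = 1^n·0^{2n}, and let j be the number of occurrences of the letter 1 in X. For t ∈ [1..n], let max_t = max over i ∈ [0..n−t] of the number of 1s in X[i..i+t). Then for every i ∈ [0..n), writing t = n−i, the minimum over x ∈ [0..2n] of δH(rot_x(P), T[i..i+2n)) equals t − max_t + j − max_t. -/
/-- The fragment `S[i..j)` of a string (list) `S`. -/
def frag {α : Type*} (S : List α) (i j : ℕ) : List α := (S.take j).drop i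

/-- The rotation `rot_x(S) = S[x..|S|)·S[0..x)`. -/
def rot {α : Type*} (x : ℕ) (S : List α) : List α := S.drop x ++ S.take x

/-- The Hamming distance of two strings (of equal length): the number of positions at which
they differ. -/
def hamDist {α : Type*} [DecidableEq α] (U V : List α) : ℕ :=
  (List.zipWith (fun a b => if a = b then (0 : ℕ) else 1) U V).sum

/-!
A binary word `A` with `c` ones among its first `t` letters and `j` ones in total is at distance
`(t - c) + (j - c)` from `1^t·0^s`. Rotating preserves `j`, so minimising the distance over the
rotations of `X·0^m` means maximising `c`. If `t ≤ m`, a cyclic window of length `t` is too short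
to reach both ends of `X` across the zero block, so apart from zeros it sees only letters of one
fragment of `X` of length `t`; conversely every such fragment is a prefix of a rotation.
-/

section Words

variable {α : Type*}

theorem frag_add (S : List α) (k t : ℕ) : frag S k (k + t) = (S.drop k).take t := by
  simp [frag, List.drop_take]

theorem frag_replicate_append_replicate (a b : α) {i n m t s : ℕ} (hn : i + t = n) (hs : s ≤ m) :
    frag (List.replicate n a ++ List.replicate m b) i (i + (t + s)) =
      List.replicate t a ++ List.replicate s b := by
  subst hn
  simp [frag_add, List.drop_append, List.take_append, hs]

theorem rot_perm (x : ℕ) (S : List α) : (rot x S).Perm S := by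
  simpa only [rot, List.take_append_drop] using
    List.perm_append_comm (l₁ := S.drop x) (l₂ := S.take x)

theorem rot_append_of_le_length {x : ℕ} {U : List α} (h : x ≤ U.length) (V : List α) :
    rot x (U ++ V) = U.drop x ++ V ++ U.take x := by
  rw [rot, List.drop_append_of_le_length h, List.take_append_of_le_length h]

theorem rot_append_of_length_le {x : ℕ} {U : List α} (h : U.length ≤ x) (V : List α) :
    rot x (U ++ V) = V.drop (x - U.length) ++ (U ++ V.take (x - U.length)) := by
  simp [rot, List.drop_append, List.take_append, List.take_of_length_le h,
    List.drop_of_length_le h]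

end Words

section Hamming

variable {α : Type*} [DecidableEq α]

theorem hamDist_append {U U' : List α} (h : U.length = U'.length) (V V' : List α) :
    hamDist (U ++ V) (U' ++ V') = hamDist U U' + hamDist V V' := by
  simp [hamDist, List.zipWith_append h]

theorem hamDist_replicate_add_count (a : α) (A : List α) :
    hamDist A (List.replicate A.length a) + A.count a = A.length := by
  induction A with
  | nil => simp [hamDist]
  | cons b A ih =>
    simp only [hamDist] at ih
    by_cases hb : b = a <;> simp [hamDist, List.replicate_succ, hb] <;> omega

theorem hamDist_replicate_true_append_replicate_false {A : List Bool} {t s : ℕ}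
    (hA : A.length = t + s) :
    hamDist A (List.replicate t true ++ List.replicate s false) =
      (t - (A.take t).count true) + (A.count true - (A.take t).count true) := by
  have htake : (A.take t).length = t := by simp [hA]
  have hdrop : (A.drop t).length = s := by simp [hA]
  have hsplit : hamDist A (List.replicate t true ++ List.replicate s false) =
      hamDist (A.take t) (List.replicate t true) +
        hamDist (A.drop t) (List.replicate s false) := by
    conv_lhs => rw [← List.take_append_drop t A]
    exact hamDist_append (by simp [htake]) _ _
  have hcount : (A.take t).count true + (A.drop t).count true = A.count true := by
    rw [← List.count_append, List.take_append_drop]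
  have hprefix := hamDist_replicate_add_count true (A.take t)
  have hsuffix := hamDist_replicate_add_count false (A.drop t)
  have hbool := List.count_true_add_count_false (A.drop t)
  rw [htake] at hprefix
  rw [hdrop] at hsuffix hbool
  omega

end Hamming

section Windows

variable {α : Type*} [DecidableEq α]

/-- The maximum number of occurrences of `a` in a fragment of `X` of length `t`; for `a = 1` this
is the quantity `max_t` of jumbled indexing. If `t` exceeds the length of `X`, the only
fragment considered is `X` itself. -/
def maxFragCount (a : α) (t : ℕ) (X : List α) : ℕ :=
  (Finset.range (X.length - t + 1)).sup fun k => (frag X k (k + t)).count a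

theorem count_take_drop_le_maxFragCount (a : α) (t k : ℕ) (X : List α) :
    ((X.drop k).take t).count a ≤ maxFragCount a t X := by
  have hle {l : ℕ} (hl : l ≤ X.length - t) : ((X.drop l).take t).count a ≤ maxFragCount a t X := by
    rw [← frag_add]
    exact Finset.le_sup (f := fun l => (frag X l (l + t)).count a)
      (Finset.mem_range.2 (Nat.lt_succ_of_le hl))
  rcases le_total k (X.length - t) with hk | hk
  · exact hle hk
  · refine le_trans ?_ (hle le_rfl)
    rw [List.take_of_length_le (l := X.drop (X.length - t)) (by simp; omega)]
    exact ((List.take_sublist _ _).trans (List.drop_sublist_drop_left X hk)).count_le a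

theorem exists_count_take_drop_eq_maxFragCount (a : α) (t : ℕ) (X : List α) :
    ∃ k ≤ X.length, ((X.drop k).take t).count a = maxFragCount a t X := by
  obtain ⟨k, hk, hmax⟩ := Finset.exists_mem_eq_sup (Finset.range (X.length - t + 1)) (by simp)
    fun k => (frag X k (k + t)).count a
  rw [Finset.mem_range] at hk
  exact ⟨k, by omega, by rw [maxFragCount, hmax, frag_add]⟩

theorem count_take_append_of_notMem {a : α} {V : List α} (ha : a ∉ V) (t : ℕ) (U : List α) :
    ((U ++ V).take t).count a = (U.take t).count a := by
  rw [List.take_append, List.count_append,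
    List.count_eq_zero_of_not_mem fun h => ha (List.mem_of_mem_take h), add_zero]

theorem count_take_append_le_of_notMem {a : α} {V : List α} (ha : a ∉ V) (t : ℕ) (U : List α) :
    ((V ++ U).take t).count a ≤ (U.take t).count a := by
  rw [List.take_append, List.count_append,
    List.count_eq_zero_of_not_mem fun h => ha (List.mem_of_mem_take h), zero_add]
  exact (List.take_sublist_take_left (Nat.sub_le _ _)).count_le a

variable {a : α} {V : List α} {t : ℕ}

theorem count_take_rot_append_of_le_length (ha : a ∉ V) (ht : t ≤ V.length) {x : ℕ} {X : List α}
    (hx : x ≤ X.length) :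
    ((rot x (X ++ V)).take t).count a = ((X.drop x).take t).count a := by
  rw [rot_append_of_le_length hx, List.take_append_of_le_length (by simp; omega),
    count_take_append_of_notMem ha]

theorem count_take_rot_append_le_of_length_le (ha : a ∉ V) (t : ℕ) {x : ℕ} {X : List α}
    (hx : X.length ≤ x) :
    ((rot x (X ++ V)).take t).count a ≤ (X.take t).count a := by
  rw [rot_append_of_length_le hx]
  calc _ ≤ ((X ++ V.take (x - X.length)).take t).count a :=
        count_take_append_le_of_notMem (fun h => ha (List.mem_of_mem_drop h)) t _
    _ = (X.take t).count a :=
        count_take_append_of_notMem (fun h => ha (List.mem_of_mem_take h)) t X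

theorem count_take_rot_append_le_maxFragCount (ha : a ∉ V) (ht : t ≤ V.length) (x : ℕ)
    (X : List α) :
    ((rot x (X ++ V)).take t).count a ≤ maxFragCount a t X := by
  rcases le_total x X.length with hx | hx
  · rw [count_take_rot_append_of_le_length ha ht hx]
    exact count_take_drop_le_maxFragCount a t x X
  · exact (count_take_rot_append_le_of_length_le ha t hx).trans
      (count_take_drop_le_maxFragCount a t 0 X)

theorem exists_count_take_rot_append_eq_maxFragCount (ha : a ∉ V) (ht : t ≤ V.length)
    (X : List α) :
    ∃ x ≤ X.length, ((rot x (X ++ V)).take t).count a = maxFragCount a t X := by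
  obtain ⟨x, hx, hmax⟩ := exists_count_take_drop_eq_maxFragCount a t X
  exact ⟨x, hx, (count_take_rot_append_of_le_length ha ht hx).trans hmax⟩

end Windows

theorem isLeast_hamDist_rot_append_replicate_false (X : List Bool) {m t s : ℕ} (ht : t ≤ m)
    (hs : t + s = X.length + m) :
    IsLeast {v | ∃ x, x ≤ X.length + m ∧ v = hamDist (rot x (X ++ List.replicate m false))
        (List.replicate t true ++ List.replicate s false)}
      ((t - maxFragCount true t X) + (X.count true - maxFragCount true t X)) := by
  have hnotMem : true ∉ List.replicate m false := by simp
  have hlen : t ≤ (List.replicate m false).length := by simpa using ht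
  have hdist (x : ℕ) : hamDist (rot x (X ++ List.replicate m false))
      (List.replicate t true ++ List.replicate s false) =
        (t - ((rot x (X ++ List.replicate m false)).take t).count true) +
          (X.count true - ((rot x (X ++ List.replicate m false)).take t).count true) := by
    have hperm := rot_perm x (X ++ List.replicate m false)
    rw [hamDist_replicate_true_append_replicate_false (by simp [hperm.length_eq, hs]),
      hperm.count_eq, List.count_append, List.count_eq_zero_of_not_mem hnotMem, add_zero]
  constructor
  · obtain ⟨x, hx, hmax⟩ := exists_count_take_rot_append_eq_maxFragCount hnotMem hlen X
    exact ⟨x, by omega, by rw [hdist, hmax]⟩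
  · rintro _ ⟨x, -, rfl⟩
    have hle := count_take_rot_append_le_maxFragCount hnotMem hlen x X
    rw [hdist]
    gcongr

/-- For a binary string `X` (where `true` plays the role of the letter 1) of length `n`,
with `P = X·0^n`, `T = 1^n·0^{2n}`, `j` the number of 1s in `X`, and, for `t ∈ [1..n]`,
`max_t` the maximum number of 1s in a length-`t` fragment of `X`: for every `i ∈ [0..n)`,
with `t = n − i`, the minimum over `x ∈ [0..2n]` of `δH(rot_x(P), T[i..i+2n))` equals
`t − max_t + j − max_t`. -/
theorem mismatch_cpm_jumbled_reduction
    (X : List Bool) (n : ℕ) (hX : X.length = n)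
    (P T : List Bool)
    (hP : P = X ++ List.replicate n false)
    (hT : T = List.replicate n true ++ List.replicate (2 * n) false)
    (j : ℕ) (hj : j = X.count true)
    (i : ℕ) (hi : i < n) :
    sInf {v | ∃ x, x ≤ 2 * n ∧ v = hamDist (rot x P) (frag T i (i + 2 * n))} =
      ((n - i) - (Finset.range (n - (n - i) + 1)).sup
          (fun i' => (frag X i' (i' + (n - i))).count true)) +
        (j - (Finset.range (n - (n - i) + 1)).sup
          (fun i' => (frag X i' (i' + (n - i))).count true)) := by
  subst hX hP hT hj
  have hfrag : frag (List.replicate X.length true ++ List.replicate (2 * X.length) false) i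
      (i + 2 * X.length) =
        List.replicate (X.length - i) true ++ List.replicate (X.length + i) false := by
    rw [show 2 * X.length = X.length - i + (X.length + i) by omega]
    exact frag_replicate_append_replicate true false (by omega) (by omega)
  rw [hfrag, two_mul]
  exact (isLeast_hamDist_rot_append_replicate_false X (Nat.sub_le _ _) (by omega)).csInf_eq
end

section
/- Let Q be a string of length q ≥ 1, let r ∈ [0..q), let U and V be strings, and let m be an integer with m ≤ |U| and m ≤ |V|. Define I = { a ∈ [0..|U|) : U[a] ≠ Q[a mod q] } and J = { b ∈ [0..|V|) : V[b] ≠ Q[(b+r) mod q] }. Let p ∈ [0..|U|−m] and x ∈ [0..|V|−m] satisfy p ≡ x + r (mod q). Then δH(U[p..p+m), V[x..x+m)) = |I ∩ [p..p+m)| + |J ∩ [x..x+m)| − Σ_{t=0}^{m−1} ∇(p+t, x+t), where ∇(a,b) = 0 if not both a ∈ I and b ∈ J, ∇(a,b) = 1 if a ∈ I, b ∈ J, and U[a] ≠ V[b], and ∇(a,b) = 2 if a ∈ I, b ∈ J, and U[a] = V[b]. -/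
/-- The set of misperiods of `S` with respect to the rotation of `Q` by `shift`, i.e.,
positions `a ∈ [0..|S|)` with `S[a] ≠ Q[(a + shift) mod |Q|]`. -/
def misperiods {α : Type*} [DecidableEq α] (S Q : List α) (shift : ℕ) : Finset ℕ :=
  (Finset.range S.length).filter (fun a => S[a]? ≠ Q[(a + shift) % Q.length]?)

/-- The mismatch-correcting function `∇(a,b)`: it is `0` unless `a` is a misperiod of `U`
and `b` is a misperiod of `V` (w.r.t. `Q` and its rotation by `r`), in which case it is `2`
if `U[a] = V[b]` and `1` otherwise. -/
def nabla {α : Type*} [DecidableEq α] (U V Q : List α) (r : ℕ) (a b : ℕ) : ℕ :=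
  if a ∈ misperiods U Q 0 ∧ b ∈ misperiods V Q r then
    (if U[a]? = V[b]? then 2 else 1)
  else 0

/-!
At offset `t` of the windows, the letters `u = U[p + t]` and `v = V[x + t]` are compared with the
same letter `c` of `Q`, because `p ≡ x + r`. If at most one of `u`, `v` differs from `c`, then
`[u ≠ v] = [u ≠ c] + [v ≠ c]`; if both differ, the right-hand side is `2` and exceeds the left by
`2 - [u ≠ v]`, which is the value of `∇`. Summing over `t` gives the theorem.
-/

section

variable {α : Type*}

theorem hamDist_eq_sum_range [DecidableEq α] (U V : List α) :
    hamDist U V =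
      ∑ t ∈ Finset.range (min U.length V.length), if U[t]? = V[t]? then 0 else 1 := by
  induction U generalizing V with
  | nil => simp [hamDist]
  | cons u U ih =>
    cases V with
    | nil => simp [hamDist]
    | cons v V =>
      have hcons : hamDist (u :: U) (v :: V) = (if u = v then 0 else 1) + hamDist U V := by
        simp only [hamDist, List.zipWith_cons_cons, List.sum_cons]
      simp only [hcons, ih, List.length_cons, Nat.add_min_add_right, Finset.sum_range_succ',
        List.getElem?_cons_succ, List.getElem?_cons_zero, Option.some.injEq, add_comm]

theorem length_frag (S : List α) (i j : ℕ) : (frag S i j).length = min j S.length - i := by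
  simp only [frag, List.length_drop, List.length_take]

theorem getElem?_frag_of_lt (S : List α) {i j t : ℕ} (h : i + t < j) :
    (frag S i j)[t]? = S[i + t]? := by
  rw [frag, List.getElem?_drop, List.getElem?_take_of_lt h]

theorem hamDist_frag_eq_sum_range [DecidableEq α] {U V : List α} {m p x : ℕ}
    (hp : p + m ≤ U.length) (hx : x + m ≤ V.length) :
    hamDist (frag U p (p + m)) (frag V x (x + m)) =
      ∑ t ∈ Finset.range m, if U[p + t]? = V[x + t]? then 0 else 1 := by
  have hlen : min (frag U p (p + m)).length (frag V x (x + m)).length = m := by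
    simp only [length_frag]
    omega
  rw [hamDist_eq_sum_range, hlen]
  refine Finset.sum_congr rfl fun t ht_mem => ?_
  have ht : t < m := Finset.mem_range.mp ht_mem
  rw [getElem?_frag_of_lt U (by omega), getElem?_frag_of_lt V (by omega)]

theorem card_inter_Ico_eq_sum_range (s : Finset ℕ) (p m : ℕ) :
    (s ∩ Finset.Ico p (p + m)).card = ∑ t ∈ Finset.range m, if p + t ∈ s then 1 else 0 := by
  rw [Finset.inter_comm, ← Finset.filter_mem_eq_inter, Finset.card_filter,
    Finset.sum_Ico_eq_sum_range, Nat.add_sub_cancel_left]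

theorem mem_misperiods_iff_of_lt [DecidableEq α] {S : List α} (Q : List α) (shift : ℕ) {a : ℕ}
    (ha : a < S.length) :
    a ∈ misperiods S Q shift ↔ S[a]? ≠ Q[(a + shift) % Q.length]? := by
  rw [misperiods, Finset.mem_filter, Finset.mem_range, and_iff_right ha]

theorem mismatch_add_surplus_eq_mismatch_add_mismatch [DecidableEq α] (u v c : α) :
    (if u = v then (0 : ℕ) else 1) + (if u ≠ c ∧ v ≠ c then if u = v then 2 else 1 else 0) =
      (if u ≠ c then 1 else 0) + (if v ≠ c then 1 else 0) := by
  by_cases hu : u = c <;> by_cases hv : v = c <;> by_cases huv : u = v <;> simp_all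

theorem mismatch_add_nabla_eq [DecidableEq α] {U V Q : List α} {r a b : ℕ}
    (ha : a < U.length) (hb : b < V.length) (hab : a ≡ b + r [MOD Q.length]) :
    (if U[a]? = V[b]? then 0 else 1) + nabla U V Q r a b =
      (if a ∈ misperiods U Q 0 then 1 else 0) + (if b ∈ misperiods V Q r then 1 else 0) := by
  have haligned : a % Q.length = (b + r) % Q.length := hab
  simp only [nabla, mem_misperiods_iff_of_lt Q _ ha, mem_misperiods_iff_of_lt Q _ hb,
    add_zero, haligned, mismatch_add_surplus_eq_mismatch_add_mismatch]

end

/-- The Hamming distance of aligned windows of two strings that are approximately periodic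
with aligned periodicities equals the number of misperiods in the two windows minus the
correction term `Σ_t ∇(p+t, x+t)`. -/
theorem hamDist_windows_eq_misperiods_sub_surplus {α : Type*} [DecidableEq α]
    (Q : List α) (q : ℕ) (hQ : Q.length = q) (hq : 1 ≤ q) (r : ℕ) (hr : r < q)
    (U V : List α) (m : ℕ) (hmU : m ≤ U.length) (hmV : m ≤ V.length)
    (p x : ℕ) (hp : p + m ≤ U.length) (hx : x + m ≤ V.length)
    (hmod : p % q = (x + r) % q) :
    (hamDist (frag U p (p + m)) (frag V x (x + m)) : ℤ) =
      ((misperiods U Q 0 ∩ Finset.Ico p (p + m)).card : ℤ) +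
        ((misperiods V Q r ∩ Finset.Ico x (x + m)).card : ℤ) -
        ∑ t ∈ Finset.range m, (nabla U V Q r (p + t) (x + t) : ℤ) := by
  subst hQ
  have hoffset : ∀ t ∈ Finset.range m,
      (if U[p + t]? = V[x + t]? then 0 else 1) + nabla U V Q r (p + t) (x + t) =
        (if p + t ∈ misperiods U Q 0 then 1 else 0) +
          (if x + t ∈ misperiods V Q r then 1 else 0) := by
    intro t ht_mem
    have ht : t < m := Finset.mem_range.mp ht_mem
    have haligned : p + t ≡ x + t + r [MOD Q.length] := by
      rw [add_right_comm]
      exact Nat.ModEq.add_right t hmod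
    exact mismatch_add_nabla_eq (by omega) (by omega) haligned
  have hsum := Finset.sum_congr rfl hoffset
  rw [Finset.sum_add_distrib, Finset.sum_add_distrib, ← hamDist_frag_eq_sum_range hp hx,
    ← card_inter_Ico_eq_sum_range, ← card_inter_Ico_eq_sum_range] at hsum
  rw [eq_sub_iff_add_eq]
  exact_mod_cast hsum
end

section
/- Let T be a string of length n, let P be a string of length m with P = P1·P2 for strings P1, P2, and let k ≥ 0 be an integer. If i ∈ [0..n−m] and δH(T[i..i+m), rot_x(P)) ≤ k for some x ∈ [0..m], then there exists a position s with i ≤ s such that either s + |P1| ≤ i + m and δH(T[s..s+|P1|), P1) ≤ k, or s + |P2| ≤ i + m and δH(T[s..s+|P2|), P2) ≤ k. In particular, every circular k-mismatch occurrence of P in T contains a standard k-mismatch occurrence of P1 or of P2. -/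
/-!
A rotation of `P1 ++ P2` cuts the string at one point only, so the half not containing the cut
survives as a contiguous block of the rotation. Restricting an alignment of two strings to the
positions of a block does not increase the number of mismatches.
-/

section Fragments

variable {α : Type*}

theorem frag_frag (S : List α) (i j a b : ℕ) :
    frag (frag S i j) a b = frag S (i + a) (min (i + b) j) := by
  simp only [frag, List.take_drop, List.take_take, List.drop_drop]

theorem exists_frag_eq_of_infix {B W : List α} (hB : B <:+: W) :
    ∃ a, a + B.length ≤ W.length ∧ frag W a (a + B.length) = B := by
  obtain ⟨A, C, rfl⟩ := hB
  refine ⟨A.length, by simp, ?_⟩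
  rw [frag, ← List.length_append, List.take_left, List.drop_left]

theorem hamDist_frag_le [DecidableEq α] (U V : List α) (a b : ℕ) :
    hamDist (frag U a b) (frag V a b) ≤ hamDist U V := by
  simp only [hamDist, frag, ← List.take_zipWith, ← List.drop_zipWith]
  exact ((List.drop_sublist _ _).trans (List.take_sublist _ _)).sum_le_sum (by simp)

theorem exists_hamDist_frag_le_of_infix [DecidableEq α] {B W : List α} (hB : B <:+: W)
    (T : List α) (i : ℕ) :
    ∃ s, i ≤ s ∧ s + B.length ≤ i + W.length ∧
      hamDist (frag T s (s + B.length)) B ≤ hamDist (frag T i (i + W.length)) W := by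
  obtain ⟨a, ha, hfrag⟩ := exists_frag_eq_of_infix hB
  refine ⟨i + a, by omega, by omega, ?_⟩
  calc hamDist (frag T (i + a) (i + a + B.length)) B
      = hamDist (frag (frag T i (i + W.length)) a (a + B.length))
          (frag W a (a + B.length)) := by
        rw [frag_frag, hfrag, min_eq_left (by omega), add_assoc]
    _ ≤ hamDist (frag T i (i + W.length)) W := hamDist_frag_le ..

end Fragments

section Rotations

variable {α : Type*}

theorem length_rot (x : ℕ) (S : List α) : (rot x S).length = S.length := by
  rw [rot, List.length_append, add_comm, ← List.length_append, List.take_append_drop]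

theorem rot_append_of_le_length_s10 {x : ℕ} {S : List α} (hx : x ≤ S.length) (S' : List α) :
    rot x (S ++ S') = S.drop x ++ S' ++ S.take x := by
  rw [rot, List.drop_append_of_le_length hx, List.take_append_of_le_length hx]

theorem rot_length_add_append (y : ℕ) (S S' : List α) :
    rot (S.length + y) (S ++ S') = S'.drop y ++ S ++ S'.take y := by
  rw [rot, List.drop_length_add_append, List.take_length_add_append, List.append_assoc]

theorem infix_rot_append (x : ℕ) (S S' : List α) :
    S <:+: rot x (S ++ S') ∨ S' <:+: rot x (S ++ S') := by
  rcases le_total x S.length with hx | hx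
  · exact .inr ⟨S.drop x, S.take x, (rot_append_of_le_length_s10 hx S').symm⟩
  · obtain ⟨y, rfl⟩ := Nat.exists_eq_add_of_le hx
    exact .inl ⟨S'.drop y, S'.take y, (rot_length_add_append y S S').symm⟩

end Rotations

/-- Every circular `k`-mismatch occurrence of `P = P1·P2` in `T` contains a standard
`k`-mismatch occurrence of `P1` or of `P2`. -/
theorem circular_occurrence_contains_half_occurrence {α : Type*} [DecidableEq α]
    (T P P1 P2 : List α) (n m k : ℕ)
    (hT : T.length = n) (hPm : P.length = m) (hP : P = P1 ++ P2)
    (i : ℕ) (hi : i + m ≤ n)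
    (hocc : ∃ x, x ≤ m ∧ hamDist (frag T i (i + m)) (rot x P) ≤ k) :
    ∃ s, i ≤ s ∧
      ((s + P1.length ≤ i + m ∧ hamDist (frag T s (s + P1.length)) P1 ≤ k) ∨
        (s + P2.length ≤ i + m ∧ hamDist (frag T s (s + P2.length)) P2 ≤ k)) := by
  obtain ⟨x, -, hx⟩ := hocc
  have hlength : (rot x (P1 ++ P2)).length = m := by rw [length_rot, ← hP, hPm]
  rw [hP, ← hlength] at hx
  rw [← hlength]
  rcases infix_rot_append x P1 P2 with hinfix | hinfix
  · obtain ⟨s, his, hend, hdist⟩ := exists_hamDist_frag_le_of_infix hinfix T i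
    exact ⟨s, his, .inl ⟨hend, hdist.trans hx⟩⟩
  · obtain ⟨s, his, hend, hdist⟩ := exists_hamDist_frag_le_of_infix hinfix T i
    exact ⟨s, his, .inr ⟨hend, hdist.trans hx⟩⟩
end

section
/- Let P be an s×s permutation matrix (a 0/1 matrix with exactly one 1 in each row and each column), and define the (s+1)×(s+1) matrix P^Σ by P^Σ[i,j] = Σ_{i' ≥ i} Σ_{j' < j} P[i',j'] for i,j ∈ [0..s]. Define D[i,j] = 2·P^Σ[i,j] + i − j. Then D is a Monge matrix: for all i ≤ j and ℓ ≤ r in [0..s], D[i,ℓ] + D[j,r] ≤ D[i,r] + D[j,ℓ]. -/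
/-!
The cross difference `P^Σ[i,r] + P^Σ[j,ℓ] - P^Σ[i,ℓ] - P^Σ[j,r]` is the sum of the entries of `P` in
the block with rows `[i, j)` and columns `[ℓ, r)`, so it is nonnegative as soon as `P` is. Scaling
by a nonnegative constant preserves this, and a summand depending on the row alone or on the column
alone does not contribute to the cross difference.
-/

/-- The Monge property of `M` restricted to rows in `S` and columns in `T`. The restriction lets
finite matrices be encoded as functions on `ℕ × ℕ` whose values outside the range are irrelevant. -/
def MongeOn {α β R : Type*} [LE α] [LE β] [Add R] [LE R] (S : Set α) (T : Set β)
    (M : α → β → R) : Prop :=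
  ∀ ⦃i⦄, i ∈ S → ∀ ⦃j⦄, j ∈ S → ∀ ⦃ℓ⦄, ℓ ∈ T → ∀ ⦃r⦄, r ∈ T → i ≤ j → ℓ ≤ r →
    M i ℓ + M j r ≤ M i r + M j ℓ

namespace MongeOn

variable {α β R : Type*} [LE α] [LE β] {S : Set α} {T : Set β} {M N : α → β → R}

theorem congr [Add R] [LE R] (hM : MongeOn S T M) (hMN : ∀ i ∈ S, ∀ j ∈ T, N i j = M i j) :
    MongeOn S T N := by
  intro i hi j hj ℓ hℓ r hr hij hℓr
  rw [hMN i hi ℓ hℓ, hMN j hj r hr, hMN i hi r hr, hMN j hj ℓ hℓ]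
  exact hM hi hj hℓ hr hij hℓr

theorem add [AddCommMonoid R] [Preorder R] [IsOrderedAddMonoid R] (hM : MongeOn S T M)
    (hN : MongeOn S T N) : MongeOn S T fun i j => M i j + N i j := by
  intro i hi j hj ℓ hℓ r hr hij hℓr
  rw [add_add_add_comm, add_add_add_comm (M i r)]
  exact add_le_add (hM hi hj hℓ hr hij hℓr) (hN hi hj hℓ hr hij hℓr)

theorem const_mul [NonUnitalNonAssocSemiring R] [Preorder R] [PosMulMono R]
    (hM : MongeOn S T M) {c : R} (hc : 0 ≤ c) : MongeOn S T fun i j => c * M i j := by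
  intro i hi j hj ℓ hℓ r hr hij hℓr
  simpa only [mul_add] using mul_le_mul_of_nonneg_left (hM hi hj hℓ hr hij hℓr) hc

end MongeOn

theorem mongeOn_row_add_col {α β R : Type*} [LE α] [LE β] [AddCommMonoid R] [Preorder R]
    (S : Set α) (T : Set β) (u : α → R) (v : β → R) : MongeOn S T fun i j => u i + v j := by
  intro i _ j _ ℓ _ r _ _ _
  have exchange : u i + v ℓ + (u j + v r) = u i + v r + (u j + v ℓ) := by abel
  exact exchange.le

section DominanceSum

variable {R : Type*} [AddCommMonoid R]

/-- The matrix `P^Σ` of a matrix `P` with `m` rows: `P^Σ[i,j]` is the sum of the entries of `P`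
in rows `i, …, m - 1` and columns `0, …, j - 1`. -/
def dominanceSum (m : ℕ) (P : ℕ → ℕ → R) (i j : ℕ) : R :=
  ∑ i' ∈ Finset.Ico i m, ∑ j' ∈ Finset.range j, P i' j'

theorem dominanceSum_eq_sum_Ico_add {m i j : ℕ} (P : ℕ → ℕ → R) (hij : i ≤ j) (hj : j ≤ m)
    (r : ℕ) :
    dominanceSum m P i r =
      ∑ i' ∈ Finset.Ico i j, ∑ j' ∈ Finset.range r, P i' j' + dominanceSum m P j r :=
  (Finset.sum_Ico_consecutive _ hij hj).symm

theorem dominanceSum_add_dominanceSum {m i j ℓ r : ℕ} (P : ℕ → ℕ → R) (hij : i ≤ j) (hj : j ≤ m)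
    (hℓr : ℓ ≤ r) :
    dominanceSum m P i r + dominanceSum m P j ℓ =
      dominanceSum m P i ℓ + dominanceSum m P j r +
        ∑ i' ∈ Finset.Ico i j, ∑ j' ∈ Finset.Ico ℓ r, P i' j' := by
  have split_cols : ∑ i' ∈ Finset.Ico i j, ∑ j' ∈ Finset.range r, P i' j' =
      ∑ i' ∈ Finset.Ico i j, ∑ j' ∈ Finset.range ℓ, P i' j' +
        ∑ i' ∈ Finset.Ico i j, ∑ j' ∈ Finset.Ico ℓ r, P i' j' := by
    simp only [← Finset.sum_add_distrib, Finset.sum_range_add_sum_Ico _ hℓr]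
  rw [dominanceSum_eq_sum_Ico_add P hij hj r, dominanceSum_eq_sum_Ico_add P hij hj ℓ, split_cols]
  abel

theorem mongeOn_dominanceSum [Preorder R] [IsOrderedAddMonoid R] {m n : ℕ} {P : ℕ → ℕ → R}
    (hP : ∀ i < m, ∀ j < n, 0 ≤ P i j) :
    MongeOn (Set.Iic m) (Set.Iic n) (dominanceSum m P) := by
  intro i _ j (hj : j ≤ m) ℓ _ r (hr : r ≤ n) hij hℓr
  have block_nonneg : 0 ≤ ∑ i' ∈ Finset.Ico i j, ∑ j' ∈ Finset.Ico ℓ r, P i' j' :=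
    Finset.sum_nonneg fun i' hi' => Finset.sum_nonneg fun j' hj' =>
      hP i' ((Finset.mem_Ico.1 hi').2.trans_le hj) j' ((Finset.mem_Ico.1 hj').2.trans_le hr)
  rw [dominanceSum_add_dominanceSum P hij hj hℓr]
  exact le_add_of_nonneg_right block_nonneg

end DominanceSum

theorem monge_of_permutation_matrix_general {R : Type*} [Semiring R] [PartialOrder R]
    [IsOrderedRing R] {m n : ℕ} {P D : ℕ → ℕ → R} {c : R} {u v : ℕ → R}
    (hP : ∀ i < m, ∀ j < n, 0 ≤ P i j) (hc : 0 ≤ c)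
    (hD : ∀ i ≤ m, ∀ j ≤ n, D i j = c * dominanceSum m P i j + (u i + v j)) :
    MongeOn (Set.Iic m) (Set.Iic n) D :=
  (((mongeOn_dominanceSum hP).const_mul hc).add (mongeOn_row_add_col _ _ u v)).congr hD

/-- If `P` is an `s×s` permutation matrix, `P^Σ[i,j] = Σ_{i' ≥ i} Σ_{j' < j} P[i',j']`, and
`D[i,j] = 2·P^Σ[i,j] + i − j`, then `D` is a Monge matrix. -/
theorem monge_of_permutation_matrix (s : ℕ) (P : ℕ → ℕ → ℕ)
    (h01 : ∀ i j, i < s → j < s → P i j = 0 ∨ P i j = 1)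
    (hrow : ∀ i, i < s → ∑ j ∈ Finset.range s, P i j = 1)
    (hcol : ∀ j, j < s → ∑ i ∈ Finset.range s, P i j = 1)
    (PSigma : ℕ → ℕ → ℕ)
    (hPSigma : ∀ i j, i ≤ s → j ≤ s →
      PSigma i j = ∑ i' ∈ Finset.Ico i s, ∑ j' ∈ Finset.range j, P i' j')
    (D : ℕ → ℕ → ℤ)
    (hD : ∀ i j, i ≤ s → j ≤ s → D i j = 2 * (PSigma i j : ℤ) + (i : ℤ) - (j : ℤ)) :
    ∀ i j ℓ r, i ≤ j → j ≤ s → ℓ ≤ r → r ≤ s →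
      D i ℓ + D j r ≤ D i r + D j ℓ := by
  have hD_eq : ∀ i ≤ s, ∀ j ≤ s,
      D i j = 2 * dominanceSum s (fun i j => (P i j : ℤ)) i j + ((i : ℤ) + -(j : ℤ)) :=
    fun i hi j hj => by
      simp [hD i j hi hj, hPSigma i j hi hj, dominanceSum, sub_eq_add_neg, add_assoc]
  exact fun i j ℓ r hij hj hℓr hr =>
    monge_of_permutation_matrix_general (fun _ _ _ _ => Int.natCast_nonneg _) zero_le_two hD_eq
      (hij.trans hj) hj (hℓr.trans hr) hr hij hℓr
end

section
/- Let P be a string of length M, let k ≥ 0 be an integer, and let B and C be strings with |B·C| ≥ M. Let A_ℓ be the suffix of B of length min(|B|, M−1), let A_r be the prefix of C of length min(|C|, M−1), and let A = A_ℓ·A_r. Then Cocc_k(P, B·C) = Cocc_k(P, B) ∪ { |B| + i : i ∈ Cocc_k(P, C) } ∪ { (|B| − |A_ℓ|) + i : i ∈ Cocc_k(P, A) }, where for a string S with |S| ≥ M, Cocc_k(P,S) = { i ∈ [0..|S|−M] : δH(S[i..i+M), rot_x(P)) ≤ k for some x ∈ [0..M] } (and Cocc_k(P,S) = ∅ if |S|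 < M). -/
/-- `Cocc_k(P,S)`: the set of starting positions of circular `k`-mismatch occurrences of
`P` in `S` (empty if `|S| < |P|`). -/
def CoccSet {α : Type*} [DecidableEq α] (k : ℕ) (P S : List α) : Set ℕ :=
  {i | i + P.length ≤ S.length ∧
    ∃ x, x ≤ P.length ∧ hamDist (frag S i (i + P.length)) (rot x P) ≤ k}

/-! For every factorization `S = X·T·Y`, the occurrences inside `T`, shifted by `|X|`, are exactly
the occurrences in `S` contained in `[|X|..|X| + |T|)`. For `S = B·C` the three intervals given by
`B`, `C` and `A` cover every fragment of length `M`: one that crosses the boundary between `B` and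
`C` has at most `M - 1` letters on either side of it, so it lies inside `A`. -/

section FragPositions

variable {α : Type*}

/-- The occurrences in `S` of a set of strings of length `m`, given by its membership predicate `p`:
the starting positions of the fragments of length `m` that satisfy `p`. The circular `k`-mismatch
occurrences of `P` are the case in which `m = |P|` and `p` says that a string is within Hamming
distance `k` of some rotation of `P`. -/
def fragPositions (m : ℕ) (p : List α → Prop) (S : List α) : Set ℕ :=
  {i | i + m ≤ S.length ∧ p (frag S i (i + m))}

theorem frag_append_append {T : List α} {j : ℕ} (X Y : List α) (i : ℕ) (hj : j ≤ T.length) :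
    frag (X ++ T ++ Y) (X.length + i) (X.length + j) = frag T i j := by
  unfold frag
  rw [List.append_assoc, List.take_length_add_append, List.drop_length_add_append,
    List.take_append_of_le_length hj]

theorem image_fragPositions_eq_sep (m : ℕ) (p : List α → Prop) (X T Y : List α) :
    (fun i => X.length + i) '' fragPositions m p T =
      {j ∈ fragPositions m p (X ++ T ++ Y) | X.length ≤ j ∧ j + m ≤ X.length + T.length} := by
  ext j
  constructor
  · rintro ⟨i, ⟨hi, hp⟩, rfl⟩
    refine ⟨⟨?_, ?_⟩, Nat.le_add_right _ _,
      (Nat.add_assoc ..).trans_le (Nat.add_le_add_left hi _)⟩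
    · simp only [List.length_append]
      omega
    · rwa [Nat.add_assoc, frag_append_append X Y i hi]
  · rintro ⟨⟨-, hp⟩, hXj, hjT⟩
    obtain ⟨i, rfl⟩ := Nat.exists_eq_add_of_le hXj
    have hi : i + m ≤ T.length := by omega
    rw [Nat.add_assoc, frag_append_append X Y i hi] at hp
    exact ⟨i, ⟨hi, hp⟩, rfl⟩

theorem fragPositions_append {m n r : ℕ} {B : List α} (p : List α → Prop) (C : List α)
    (hn : n ≤ B.length - (m - 1)) (hr : m - 1 ≤ r) :
    fragPositions m p (B ++ C) =
      fragPositions m p B ∪ ((fun i => B.length + i) '' fragPositions m p C) ∪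
        ((fun i => n + i) '' fragPositions m p (B.drop n ++ C.take r)) := by
  have hB : fragPositions m p B = {j ∈ fragPositions m p (B ++ C) | j + m ≤ B.length} := by
    simpa using image_fragPositions_eq_sep m p [] B C
  have hC : (fun i => B.length + i) '' fragPositions m p C =
      {j ∈ fragPositions m p (B ++ C) | B.length ≤ j ∧ j + m ≤ B.length + C.length} := by
    simpa using image_fragPositions_eq_sep m p B C []
  have hA : (fun i => n + i) '' fragPositions m p (B.drop n ++ C.take r) =
      {j ∈ fragPositions m p (B ++ C) | n ≤ j ∧ j + m ≤ B.length + min r C.length} := by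
    have hsplit : B.take n ++ (B.drop n ++ C.take r) ++ C.drop r = B ++ C := by
      rw [← List.append_assoc, List.take_append_drop, List.append_assoc, List.take_append_drop]
    have hnB : n ≤ B.length := by omega
    have hlen : n + (B.drop n ++ C.take r).length = B.length + min r C.length := by
      simp only [List.length_append, List.length_drop, List.length_take]
      omega
    simpa only [hsplit, List.length_take_of_le hnB, hlen] using
      image_fragPositions_eq_sep m p (B.take n) (B.drop n ++ C.take r) (C.drop r)
  have hcover : ∀ j ∈ fragPositions m p (B ++ C),
      (j + m ≤ B.length ∨ B.length ≤ j ∧ j + m ≤ B.length + C.length) ∨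
        n ≤ j ∧ j + m ≤ B.length + min r C.length := by
    intro j hj
    have hjm : j + m ≤ B.length + C.length := List.length_append ▸ hj.1
    omega
  rw [hB, hC, hA, ← Set.sep_or, ← Set.sep_or]
  exact (Set.sep_eq_self_iff_mem_true.mpr hcover).symm

end FragPositions

theorem coccSet_eq_fragPositions {α : Type*} [DecidableEq α] (k : ℕ) (P S : List α) :
    CoccSet k P S =
      fragPositions P.length (fun U => ∃ x, x ≤ P.length ∧ hamDist U (rot x P) ≤ k) S :=
  rfl

/-- Circular `k`-mismatch occurrences of `P` in a concatenation `B·C` decompose into the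
occurrences in `B`, the occurrences in `C` (shifted by `|B|`), and the occurrences in
`A = A_ℓ·A_r` (shifted by `|B| − |A_ℓ|`), where `A_ℓ` is the suffix of `B` of length
`min(|B|, M−1)` and `A_r` is the prefix of `C` of length `min(|C|, M−1)`. -/
theorem cocc_concat_decomposition {α : Type*} [DecidableEq α]
    (P B C : List α) (M k : ℕ) (hM : P.length = M) (hlen : M ≤ (B ++ C).length) :
    CoccSet k P (B ++ C) =
      CoccSet k P B ∪
        ((fun i => B.length + i) '' CoccSet k P C) ∪
        ((fun i => (B.length - (B.drop (B.length - (M - 1))).length) + i) ''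
          CoccSet k P (B.drop (B.length - (M - 1)) ++ C.take (M - 1))) := by
  subst hM
  have hAl : B.length - (B.drop (B.length - (P.length - 1))).length =
      B.length - (P.length - 1) := by
    rw [List.length_drop]
    omega
  simp only [hAl, coccSet_eq_fragPositions]
  exact fragPositions_append _ C le_rfl le_rfl
end
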